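/- arXiv:1407.6448 — 2 statements merged into one kernel-verified Lean document; each statement's English description precedes it below -/
import Mathlib

section
/- Assume conditions (A), (S), (S)₂ and (K). Then there exist constants C > 0 and c > 0 such that for every r ≥ 0, every ω ∈ S^{n−1}, and every differentiable function û : [0,∞) → ℂᵐ satisfying A⁰û′(t) + i r A(ω) û(t) + L û(t) = 0 for all t ≥ 0, one has |û(t)| ≤ C e^{−c ρ(r) t} |û(0)| for all t ≥ 0. -/
open Matrix BigOperators Finset

noncomputable section

/-- Complexification of a real matrix. -/
def cmap {a b : ℕ} (X : Matrix (Fin a) (Fin b) ℝ) : Matrix (Fin a) (Fin b) ℂ :=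
  X.map (fun x => (x : ℂ))

/-- Real part of the standard Hermitian inner product `⟨x, y⟩ = ∑ xᵢ conj yᵢ` on `ℂᵐ`. -/
def reIP {m : ℕ} (x y : Fin m → ℂ) : ℝ := (∑ i, x i * (starRingEnd ℂ) (y i)).re

/-- Symmetric part `X₁ = (X + Xᵀ)/2` of a real square matrix. -/
def symP {m : ℕ} (X : Matrix (Fin m) (Fin m) ℝ) : Matrix (Fin m) (Fin m) ℝ :=
  (2⁻¹ : ℝ) • (X + Xᵀ)

/-- Skew-symmetric part `X₂ = (X − Xᵀ)/2` of a real square matrix. -/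
def skewP {m : ℕ} (X : Matrix (Fin m) (Fin m) ℝ) : Matrix (Fin m) (Fin m) ℝ :=
  (2⁻¹ : ℝ) • (X - Xᵀ)

/-- Kernel of (the complexification of) a real matrix, as a subset of `ℂᵐ`. -/
def kerC {m : ℕ} (L : Matrix (Fin m) (Fin m) ℝ) : Set (Fin m → ℂ) :=
  {z | (cmap L).mulVec z = 0}

/-- Euclidean norm on `ℂᵐ`. -/
def cnrm {m : ℕ} (z : Fin m → ℂ) : ℝ := Real.sqrt (∑ i, Complex.normSq (z i))

/-!
The multiplier `P = M + S - iεK(ω)`, with `M` large and `ε` small, turns the equation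
`A⁰û' + Gû = 0`, `G = irA(ω) + L`, into a dissipative one: `PA⁰` is Hermitian and comparable to the
identity, so that `E = Re⟨PA⁰û, û⟩` is an equivalent squared norm with `E' = -2 Re⟨PGû, û⟩`. In
`Re⟨PGz, z⟩` the term `irA(ω)` drops out of the `M` part by symmetry, `S` contributes a nonnegative
amount by (S)₂, and by (S) the lower-order part dominates `|Lz|²`. The compensating matrix gives
`εr Re⟨K(ω)A(ω)z, z⟩`, which by (K) and compactness of the sphere is at least
`εr (δ|z|² - N|Lz|²)` uniformly in `ω`. With `ε = κ r / (1 + r²)` and `κ` small, the `|Lz|²` losses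
are absorbed for all `r` simultaneously, and what remains is `Re⟨PGz, z⟩ ≥ γ ρ(r) |z|²`.
-/

section Lyapunov

variable {𝕜 E : Type*} [RCLike 𝕜] [NormedAddCommGroup E] [InnerProductSpace 𝕜 E]
  [NormedSpace ℝ E] [IsScalarTower ℝ 𝕜 E]

lemma le_exp_mul_of_hasDerivWithinAt_le {f f' : ℝ → ℝ} {k : ℝ}
    (hf : ∀ t, 0 ≤ t → HasDerivWithinAt f (f' t) (Set.Ici 0) t)
    (hbound : ∀ t, 0 ≤ t → f' t ≤ k * f t) {t : ℝ} (ht : 0 ≤ t) :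
    f t ≤ f 0 * Real.exp (k * t) := by
  have hgronwall := le_gronwallBound_of_liminf_deriv_right_le (f' := f') (K := k) (ε := 0)
    (fun s hs => (hf s hs.1).continuousWithinAt.mono Set.Icc_subset_Ici_self)
    (fun s hs _ hr => ((hf s hs.1).mono (Set.Ici_subset_Ici.2 hs.1)).liminf_right_slope_le hr)
    le_rfl (fun s hs => by simpa only [add_zero] using hbound s hs.1) t (Set.right_mem_Icc.2 ht)
  rwa [gronwallBound_ε0, sub_zero] at hgronwall

lemma hasDerivWithinAt_reApplyInnerSelf {H : E →L[𝕜] E} (hH : (H : E →ₗ[𝕜] E).IsSymmetric)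
    {u : ℝ → E} {u' : E} {s : Set ℝ} {t : ℝ} (hu : HasDerivWithinAt u u' s t) :
    HasDerivWithinAt (fun τ => H.reApplyInnerSelf (u τ)) (2 * RCLike.re (inner 𝕜 (H u') (u t)))
      s t := by
  have hHu : HasDerivWithinAt (fun τ => H (u τ)) (H u') s t :=
    (H.restrictScalars ℝ).hasFDerivAt.comp_hasDerivWithinAt t hu
  have hderiv := (RCLike.reCLM (K := 𝕜)).hasFDerivAt.comp_hasDerivWithinAt t (hHu.inner 𝕜 hu)
  have hvalue : RCLike.re (inner 𝕜 (H (u t)) u' + inner 𝕜 (H u') (u t))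
      = 2 * RCLike.re (inner 𝕜 (H u') (u t)) := by
    rw [map_add, inner_re_symm (H (u t)), two_mul, ← H.coe_coe, hH u' (u t)]
  exact hvalue ▸ hderiv

theorem norm_le_exp_mul_of_lyapunov {A G P : E →L[𝕜] E} {α β γ : ℝ}
    (hα : 0 < α) (hβ : 0 < β) (hγ : 0 ≤ γ)
    (hsymm : ((P * A : E →L[𝕜] E) : E →ₗ[𝕜] E).IsSymmetric)
    (hlower : ∀ x, α * ‖x‖ ^ 2 ≤ (P * A).reApplyInnerSelf x)
    (hupper : ∀ x, (P * A).reApplyInnerSelf x ≤ β * ‖x‖ ^ 2)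
    (hdiss : ∀ x, γ * ‖x‖ ^ 2 ≤ (P * G).reApplyInnerSelf x)
    {u u' : ℝ → E} (hu : ∀ t, 0 ≤ t → HasDerivWithinAt u (u' t) (Set.Ici 0) t)
    (heq : ∀ t, 0 ≤ t → A (u' t) + G (u t) = 0) {t : ℝ} (ht : 0 ≤ t) :
    ‖u t‖ ≤ √(β / α) * Real.exp (-(γ / β * t)) * ‖u 0‖ := by
  set energy : ℝ → ℝ := fun t => (P * A).reApplyInnerSelf (u t)
  have henergy_deriv : ∀ t, 0 ≤ t →
      2 * RCLike.re (inner 𝕜 ((P * A) (u' t)) (u t)) ≤ -(2 * (γ / β)) * energy t := by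
    intro t ht
    have hPA : (P * A) (u' t) = -(P * G) (u t) := by
      simp only [mul_apply_eq_comp, eq_neg_of_add_eq_zero_left (heq t ht), map_neg]
    have hrate : γ / β * energy t ≤ (P * G).reApplyInnerSelf (u t) := calc
      γ / β * energy t ≤ γ / β * (β * ‖u t‖ ^ 2) := by gcongr; exact hupper (u t)
      _ = γ * ‖u t‖ ^ 2 := by field_simp
      _ ≤ _ := hdiss (u t)
    rw [hPA, inner_neg_left, map_neg, ← ContinuousLinearMap.reApplyInnerSelf_apply]
    linarith
  have hdecay : energy t ≤ energy 0 * Real.exp (-(2 * (γ / β)) * t) :=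
    le_exp_mul_of_hasDerivWithinAt_le
      (fun t ht => hasDerivWithinAt_reApplyInnerSelf hsymm (hu t ht)) henergy_deriv ht
  have hsq : ‖u t‖ ^ 2 ≤ β / α * (Real.exp (-(γ / β * t)) * ‖u 0‖) ^ 2 := by
    rw [div_mul_eq_mul_div, le_div_iff₀' hα]
    calc α * ‖u t‖ ^ 2 ≤ energy 0 * Real.exp (-(2 * (γ / β)) * t) := (hlower _).trans hdecay
      _ ≤ β * ‖u 0‖ ^ 2 * Real.exp (-(2 * (γ / β)) * t) := by gcongr; exact hupper (u 0)
      _ = β * (Real.exp (-(γ / β * t)) * ‖u 0‖) ^ 2 := by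
        rw [mul_pow, ← Real.exp_nat_mul]; push_cast; ring_nf
  rw [mul_assoc]
  refine (Real.le_sqrt_of_sq_le hsq).trans_eq ?_
  rw [Real.sqrt_mul (by positivity), Real.sqrt_sq (by positivity)]

end Lyapunov

lemma exists_pos_le_add_nat_mul {X : Type*} [TopologicalSpace X] {s : Set X} (hs : IsCompact s)
    {f g : X → ℝ} (hf : Continuous f) (hg : Continuous g) (hg0 : ∀ x, 0 ≤ g x)
    (hpos : ∀ x ∈ s, g x = 0 → 0 < f x) :
    ∃ N : ℕ, ∃ δ > 0, ∀ x ∈ s, δ ≤ f x + N * g x := by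
  obtain ⟨N, hN⟩ : ∃ N : ℕ, s ⊆ {x | 0 < f x + N * g x} := by
    refine hs.elim_directed_cover (fun N : ℕ => {x | 0 < f x + N * g x})
      (fun N => isOpen_lt (by fun_prop) (by fun_prop)) (fun x hx => Set.mem_iUnion.2 ?_)
      (Monotone.directed_le fun N N' hN x (hx : 0 < f x + N * g x) => hx.trans_le ?_)
    · rcases (hg0 x).eq_or_lt' with hgx | hgx
      · exact ⟨0, by simpa using hpos x hx hgx⟩
      · obtain ⟨N, hN⟩ := Archimedean.arch (1 - f x) hgx
        refine ⟨N, ?_⟩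
        rw [nsmul_eq_mul] at hN
        simp only [Set.mem_ofPred_eq]
        linarith
    · have := hg0 x
      gcongr
  obtain ⟨δ, hδ, h⟩ := hs.exists_forall_le' (f := fun x => f x + N * g x) (by fun_prop) hN
  exact ⟨N, δ, hδ, h⟩

section Coercivity

variable {𝕜 E F : Type*} [RCLike 𝕜] [NormedAddCommGroup E] [InnerProductSpace 𝕜 E]
  [NormedAddCommGroup F] [NormedSpace 𝕜 F]

lemma reApplyInnerSelf_add (S T : E →L[𝕜] E) (x : E) :
    (S + T).reApplyInnerSelf x = S.reApplyInnerSelf x + T.reApplyInnerSelf x := by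
  simp only [ContinuousLinearMap.reApplyInnerSelf_apply, _root_.add_apply, inner_add_left,
    map_add]

lemma reApplyInnerSelf_sub (S T : E →L[𝕜] E) (x : E) :
    (S - T).reApplyInnerSelf x = S.reApplyInnerSelf x - T.reApplyInnerSelf x := by
  simp only [ContinuousLinearMap.reApplyInnerSelf_apply, _root_.sub_apply, inner_sub_left,
    map_sub]

lemma abs_reApplyInnerSelf_le (T : E →L[𝕜] E) (x : E) :
    |T.reApplyInnerSelf x| ≤ ‖T‖ * ‖x‖ ^ 2 := by
  rw [ContinuousLinearMap.reApplyInnerSelf_apply, pow_two, ← mul_assoc]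
  exact (RCLike.abs_re_le_norm _).trans ((norm_inner_le_norm _ _).trans
    (by gcongr; exact T.le_opNorm x))

theorem exists_coercive_of_pos_on_ker [FiniteDimensional 𝕜 E] {Ω : Type*} [TopologicalSpace Ω]
    [CompactSpace Ω] {T : Ω → E →L[𝕜] E} (hT : Continuous T) (L : E →L[𝕜] F)
    (hpos : ∀ ω x, L x = 0 → x ≠ 0 → 0 < (T ω).reApplyInnerSelf x) :
    ∃ δ > 0, ∃ N ≥ 0, ∀ ω x, δ * ‖x‖ ^ 2 ≤ (T ω).reApplyInnerSelf x + N * ‖L x‖ ^ 2 := by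
  have := FiniteDimensional.proper_rclike 𝕜 E
  obtain ⟨N, δ, hδ, hsphere⟩ := exists_pos_le_add_nat_mul
    (isCompact_univ.prod (isCompact_sphere (0 : E) 1))
    (f := fun p : Ω × E => (T p.1).reApplyInnerSelf p.2) (g := fun p => ‖L p.2‖ ^ 2)
    (by simp only [ContinuousLinearMap.reApplyInnerSelf_apply]; fun_prop) (by fun_prop)
    (fun p => by positivity)
    (fun p hp hLp => hpos p.1 p.2 (by simpa using hLp) (ne_zero_of_mem_unit_sphere ⟨p.2, hp.2⟩))
  refine ⟨δ, hδ, N, N.cast_nonneg, fun ω x => ?_⟩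
  rcases eq_or_ne x 0 with rfl | hx
  · simp [ContinuousLinearMap.reApplyInnerSelf_apply]
  · have hunit := hsphere (ω, (‖x‖⁻¹ : 𝕜) • x)
      ⟨Set.mem_univ ω, by simpa using norm_smul_inv_norm hx⟩
    simp only [ContinuousLinearMap.reApplyInnerSelf_smul, map_smul, norm_smul, norm_inv,
      norm_algebraMap', norm_norm] at hunit
    calc δ * ‖x‖ ^ 2 ≤ (‖x‖⁻¹ ^ 2 * (T ω).reApplyInnerSelf x + N * (‖x‖⁻¹ * ‖L x‖) ^ 2)
          * ‖x‖ ^ 2 := by gcongr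
      _ = _ := by field_simp

lemma exists_coercive_of_pos [FiniteDimensional 𝕜 E] {T : E →L[𝕜] E}
    (hpos : ∀ x, x ≠ 0 → 0 < T.reApplyInnerSelf x) :
    ∃ δ > 0, ∀ x, δ * ‖x‖ ^ 2 ≤ T.reApplyInnerSelf x := by
  obtain ⟨δ, hδ, N, -, hcoercive⟩ := exists_coercive_of_pos_on_ker (Ω := Unit) (T := fun _ => T)
    continuous_const (0 : E →L[𝕜] E) (fun _ x _ => hpos x)
  exact ⟨δ, hδ, fun x => by simpa using hcoercive () x⟩

end Coercivity

lemma exists_norm_le_mul_norm_of_ker_le {𝕜 E F G : Type*} [NontriviallyNormedField 𝕜]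
    [CompleteSpace 𝕜] [AddCommGroup E] [Module 𝕜 E] [NormedAddCommGroup F] [NormedSpace 𝕜 F]
    [FiniteDimensional 𝕜 F] [NormedAddCommGroup G] [NormedSpace 𝕜 G]
    {R : E →ₗ[𝕜] F} {L : E →ₗ[𝕜] G} (hker : LinearMap.ker R ≤ LinearMap.ker L) :
    ∃ C > 0, ∀ x, ‖L x‖ ≤ C * ‖R x‖ := by
  obtain ⟨s, hs⟩ := R.rangeRestrict.exists_rightInverse_of_surjective R.range_rangeRestrict
  set factor : LinearMap.range R →L[𝕜] G := LinearMap.toContinuousLinearMap (L ∘ₗ s)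
  have hfactor : ∀ x, factor (R.rangeRestrict x) = L x := fun x => by
    have hmem : s (R.rangeRestrict x) - x ∈ LinearMap.ker R := by
      rw [LinearMap.sub_mem_ker_iff]
      exact congrArg Subtype.val (LinearMap.congr_fun hs (R.rangeRestrict x))
    exact LinearMap.sub_mem_ker_iff.1 (hker hmem)
  refine ⟨‖factor‖ + 1, by positivity, fun x => ?_⟩
  calc ‖L x‖ ≤ ‖factor‖ * ‖R x‖ := hfactor x ▸ factor.le_opNorm _
    _ ≤ (‖factor‖ + 1) * ‖R x‖ := by gcongr; linarith

lemma reApplyInnerSelf_star {𝕜 E : Type*} [RCLike 𝕜] [NormedAddCommGroup E]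
    [InnerProductSpace 𝕜 E] [CompleteSpace E] (T : E →L[𝕜] E) (x : E) :
    (star T).reApplyInnerSelf x = T.reApplyInnerSelf x := by
  rw [ContinuousLinearMap.star_eq_adjoint, ContinuousLinearMap.reApplyInnerSelf_apply,
    ContinuousLinearMap.adjoint_inner_left, inner_re_symm,
    ContinuousLinearMap.reApplyInnerSelf_apply]

lemma reApplyInnerSelf_add_star {𝕜 E : Type*} [RCLike 𝕜] [NormedAddCommGroup E]
    [InnerProductSpace 𝕜 E] [CompleteSpace E] (T : E →L[𝕜] E) (x : E) :
    (T + star T).reApplyInnerSelf x = 2 * T.reApplyInnerSelf x := by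
  rw [reApplyInnerSelf_add, reApplyInnerSelf_star, two_mul]

lemma exists_mul_norm_sq_le_reApplyInnerSelf {E F : Type*} [NormedAddCommGroup E]
    [InnerProductSpace ℂ E] [CompleteSpace E] [FiniteDimensional ℂ E] [NormedAddCommGroup F]
    [NormedSpace ℂ F] {T : E →L[ℂ] E} {L : E →L[ℂ] F} (hT : ∀ x, 0 ≤ T.reApplyInnerSelf x)
    (hker : ∀ x, (T + star T) x = 0 → L x = 0) :
    ∃ c > 0, ∀ x, c * ‖L x‖ ^ 2 ≤ T.reApplyInnerSelf x := by
  obtain ⟨R, hR⟩ : ∃ R, T + star T = star R * R := by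
    rw [← CStarAlgebra.nonneg_iff_eq_star_mul_self, ContinuousLinearMap.nonneg_iff_isPositive,
      ContinuousLinearMap.isPositive_def']
    exact ⟨IsSelfAdjoint.add_star_self T, fun x => by
      rw [reApplyInnerSelf_add_star]; linarith [hT x]⟩
  have hnorm : ∀ x, 2 * T.reApplyInnerSelf x = ‖R x‖ ^ 2 := fun x => by
    rw [← reApplyInnerSelf_add_star, hR, ContinuousLinearMap.star_eq_adjoint,
      ContinuousLinearMap.reApplyInnerSelf_apply, ContinuousLinearMap.mul_def]
    exact (ContinuousLinearMap.apply_norm_sq_eq_inner_adjoint_left R x).symm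
  obtain ⟨C, hC, hCR⟩ := exists_norm_le_mul_norm_of_ker_le (R := (R : E →ₗ[ℂ] E))
    (L := (L : E →ₗ[ℂ] F)) fun x (hx : R x = 0) =>
      hker x (by rw [hR, mul_apply_eq_comp, hx, map_zero])
  refine ⟨1 / (2 * C ^ 2), by positivity, fun x => ?_⟩
  rw [one_div_mul_eq_div, div_le_iff₀ (by positivity)]
  calc ‖L x‖ ^ 2 ≤ (C * ‖R x‖) ^ 2 := by gcongr; exact hCR x
    _ = T.reApplyInnerSelf x * (2 * C ^ 2) := by rw [mul_pow, ← hnorm]; ring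

section Compensation

variable {E : Type*} [NormedAddCommGroup E] [InnerProductSpace ℂ E]

lemma reApplyInnerSelf_ofReal_smul (c : ℝ) (T : E →L[ℂ] E) (x : E) :
    ((c : ℂ) • T).reApplyInnerSelf x = c * T.reApplyInnerSelf x := by
  simp only [ContinuousLinearMap.reApplyInnerSelf_apply, _root_.smul_apply, inner_smul_left,
    Complex.conj_ofReal, RCLike.re_to_complex, Complex.re_ofReal_mul]

lemma I_smul_sub_star [CompleteSpace E] (T : E →L[ℂ] E) :
    Complex.I • (T - star T) = Complex.I • T + star (Complex.I • T) := by
  rw [star_smul, RCLike.star_def, Complex.conj_I, neg_smul, smul_sub, sub_eq_add_neg]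

/-- The multiplier `M + S - iεK` of the energy method: `K` is the compensating matrix of
condition (K), weighted by `ε`, and `S` is the matrix of condition (S). -/
def compensatedMultiplier (S K : E →L[ℂ] E) (M ε : ℝ) : E →L[ℂ] E :=
  (M : ℂ) • 1 + S - (ε : ℂ) • Complex.I • K

variable {A₀ A L S K : E →L[ℂ] E} {M ε : ℝ}

lemma reApplyInnerSelf_compensatedMultiplier_mul (X : E →L[ℂ] E) (x : E) :
    (compensatedMultiplier S K M ε * X).reApplyInnerSelf x =
      M * X.reApplyInnerSelf x + (S * X).reApplyInnerSelf x
        - ε * (Complex.I • (K * X)).reApplyInnerSelf x := by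
  rw [compensatedMultiplier, sub_mul, add_mul, smul_mul_assoc, one_mul, smul_mul_assoc,
    smul_mul_assoc, reApplyInnerSelf_sub, reApplyInnerSelf_add, reApplyInnerSelf_ofReal_smul,
    reApplyInnerSelf_ofReal_smul]

lemma isSymmetric_compensatedMultiplier_mul (hA₀ : (A₀ : E →ₗ[ℂ] E).IsSymmetric)
    (hS : ((S * A₀ : E →L[ℂ] E) : E →ₗ[ℂ] E).IsSymmetric)
    (hK : ((Complex.I • (K * A₀) : E →L[ℂ] E) : E →ₗ[ℂ] E).IsSymmetric) :
    ((compensatedMultiplier S K M ε * A₀ : E →L[ℂ] E) : E →ₗ[ℂ] E).IsSymmetric := by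
  have hexpand : ((compensatedMultiplier S K M ε * A₀ : E →L[ℂ] E) : E →ₗ[ℂ] E) =
      (M : ℂ) • (A₀ : E →ₗ[ℂ] E) + (S * A₀ : E →L[ℂ] E)
        - (ε : ℂ) • (Complex.I • (K * A₀) : E →L[ℂ] E) := by
    ext x; simp [compensatedMultiplier]
  rw [hexpand]
  exact ((hA₀.smul (Complex.conj_ofReal M)).add hS).sub (hK.smul (Complex.conj_ofReal ε))

lemma abs_mul_reApplyInnerSelf_I_smul_mul_le (hε : 0 ≤ ε) (X : E →L[ℂ] E) (x : E) :
    |ε * (Complex.I • (K * X)).reApplyInnerSelf x| ≤ ε * (‖K‖ * ‖X‖) * ‖x‖ ^ 2 := by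
  have hnorm : ‖Complex.I • (K * X)‖ ≤ ‖K‖ * ‖X‖ := by
    rw [norm_smul, Complex.norm_I, one_mul]
    exact norm_mul_le K X
  rw [abs_mul, abs_of_nonneg hε, mul_assoc]
  gcongr
  exact (abs_reApplyInnerSelf_le _ x).trans (by gcongr)

lemma compensatedMultiplier_mul_bounds {a α : ℝ} {x : E} (hM : 0 ≤ M)
    (hA₀ : a * ‖x‖ ^ 2 ≤ A₀.reApplyInnerSelf x) (hMa : ‖S * A₀‖ + 2 * α ≤ M * a)
    (hε : 0 ≤ ε) (hεK : ε * (‖K‖ * ‖A₀‖) ≤ α) :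
    α * ‖x‖ ^ 2 ≤ (compensatedMultiplier S K M ε * A₀).reApplyInnerSelf x ∧
      (compensatedMultiplier S K M ε * A₀).reApplyInnerSelf x ≤
        (M * ‖A₀‖ + ‖S * A₀‖ + α) * ‖x‖ ^ 2 := by
  have hSA₀ := abs_le.1 (abs_reApplyInnerSelf_le (S * A₀) x)
  have hMA₀ : M * A₀.reApplyInnerSelf x ≤ M * (‖A₀‖ * ‖x‖ ^ 2) := by
    gcongr
    exact (le_abs_self _).trans (abs_reApplyInnerSelf_le A₀ x)
  have hKA₀ := abs_le.1 ((abs_mul_reApplyInnerSelf_I_smul_mul_le hε A₀ x).trans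
    (mul_le_mul_of_nonneg_right hεK (sq_nonneg ‖x‖)))
  rw [reApplyInnerSelf_compensatedMultiplier_mul]
  constructor
  · have hcoercive : (‖S * A₀‖ + 2 * α) * ‖x‖ ^ 2 ≤ M * A₀.reApplyInnerSelf x := calc
      (‖S * A₀‖ + 2 * α) * ‖x‖ ^ 2 ≤ M * a * ‖x‖ ^ 2 := by gcongr
      _ = M * (a * ‖x‖ ^ 2) := mul_assoc _ _ _
      _ ≤ _ := by gcongr
    linarith
  · linarith

lemma reApplyInnerSelf_I_smul_eq_zero (hA : (A : E →ₗ[ℂ] E).IsSymmetric) (x : E) :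
    (Complex.I • A).reApplyInnerSelf x = 0 := by
  have hreal : (inner ℂ (A x) x).im = 0 := hA.im_inner_apply_self x
  simp [ContinuousLinearMap.reApplyInnerSelf_apply, inner_smul_left, hreal]

lemma reApplyInnerSelf_compensatedMultiplier_mul_symbol (hA : (A : E →ₗ[ℂ] E).IsSymmetric)
    (r : ℝ) (x : E) :
    (compensatedMultiplier S K M ε * (((r : ℂ) * Complex.I) • A + L)).reApplyInnerSelf x =
      M * L.reApplyInnerSelf x + (S * L).reApplyInnerSelf x
        + r * (Complex.I • (S * A)).reApplyInnerSelf x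
        + ε * r * (K * A).reApplyInnerSelf x
        - ε * (Complex.I • (K * L)).reApplyInnerSelf x := by
  have hS : S * (((r : ℂ) * Complex.I) • A + L) = (r : ℂ) • Complex.I • (S * A) + S * L := by
    rw [mul_add, mul_smul_comm, mul_smul]
  have hK : Complex.I • (K * (((r : ℂ) * Complex.I) • A + L))
      = Complex.I • (K * L) - (r : ℂ) • (K * A) := by
    rw [mul_add, mul_smul_comm, smul_add, smul_smul, mul_left_comm, Complex.I_mul_I,
      mul_neg_one, neg_smul, neg_add_eq_sub]
  rw [reApplyInnerSelf_compensatedMultiplier_mul, hS, hK, mul_smul, reApplyInnerSelf_sub,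
    reApplyInnerSelf_add, reApplyInnerSelf_add, reApplyInnerSelf_ofReal_smul,
    reApplyInnerSelf_ofReal_smul, reApplyInnerSelf_ofReal_smul,
    reApplyInnerSelf_I_smul_eq_zero hA]
  ring

lemma mul_reApplyInnerSelf_I_smul_mul_le {δ k s r : ℝ} (hδ : 0 < δ) (hs : 0 ≤ s)
    (hsr : s ^ 2 ≤ s * r) (hK : ‖K‖ ≤ k) (x : E) :
    s * (Complex.I • (K * L)).reApplyInnerSelf x ≤
      δ / 2 * (s * r) * ‖x‖ ^ 2 + k ^ 2 / (2 * δ) * ‖L x‖ ^ 2 := by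
  have hcs : (Complex.I • (K * L)).reApplyInnerSelf x ≤ k * ‖L x‖ * ‖x‖ := calc
    (Complex.I • (K * L)).reApplyInnerSelf x ≤ ‖(Complex.I • (K * L)) x‖ * ‖x‖ :=
      re_inner_le_norm _ _
    _ = ‖K (L x)‖ * ‖x‖ := by simp [norm_smul]
    _ ≤ k * ‖L x‖ * ‖x‖ := by gcongr; exact K.le_of_opNorm_le hK _
  calc s * (Complex.I • (K * L)).reApplyInnerSelf x ≤ s * (k * ‖L x‖ * ‖x‖) := by gcongr
    _ ≤ δ / 2 * s ^ 2 * ‖x‖ ^ 2 + k ^ 2 / (2 * δ) * ‖L x‖ ^ 2 := by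
      have := sq_nonneg (δ * s * ‖x‖ - k * ‖L x‖)
      field_simp
      linarith
    _ ≤ _ := by gcongr

lemma dissipation_compensatedMultiplier {δ N c k κ s r : ℝ} {x : E}
    (hA : (A : E →ₗ[ℂ] E).IsSymmetric) (hL : 0 ≤ L.reApplyInnerSelf x)
    (hSL : c * ‖L x‖ ^ 2 ≤ (S * L + L).reApplyInnerSelf x)
    (hSA : 0 ≤ (Complex.I • (S * A)).reApplyInnerSelf x)
    (hKA : δ * ‖x‖ ^ 2 ≤ (K * A).reApplyInnerSelf x + N * ‖L x‖ ^ 2)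
    (hK : ‖K‖ ≤ k) (hM : 1 ≤ M) (hδ : 0 < δ) (hN : 0 ≤ N) (hκ : 0 ≤ κ)
    (hκc : κ * (N + k ^ 2 / (2 * δ)) ≤ c)
    (hs : 0 ≤ s) (hr : 0 ≤ r) (hs_sq : s ^ 2 ≤ s * r) (hsr : s * r ≤ 1) :
    κ * δ / 2 * (s * r) * ‖x‖ ^ 2 ≤
      (compensatedMultiplier S K M (κ * s) * (((r : ℂ) * Complex.I) • A + L)).reApplyInnerSelf
        x := by
  have hSML : c * ‖L x‖ ^ 2 ≤ M * L.reApplyInnerSelf x + (S * L).reApplyInnerSelf x := by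
    rw [reApplyInnerSelf_add] at hSL
    linarith [mul_nonneg (sub_nonneg.2 hM) hL]
  have hSA' : 0 ≤ r * (Complex.I • (S * A)).reApplyInnerSelf x := mul_nonneg hr hSA
  have hcomp : s * r * δ * ‖x‖ ^ 2 ≤ s * r * (K * A).reApplyInnerSelf x + N * ‖L x‖ ^ 2 := calc
    s * r * δ * ‖x‖ ^ 2 = s * r * (δ * ‖x‖ ^ 2) := mul_assoc _ _ _
    _ ≤ s * r * ((K * A).reApplyInnerSelf x + N * ‖L x‖ ^ 2) := by gcongr
    _ ≤ s * r * (K * A).reApplyInnerSelf x + 1 * (N * ‖L x‖ ^ 2) := by rw [mul_add]; gcongr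
    _ = _ := by rw [one_mul]
  have hcross := mul_reApplyInnerSelf_I_smul_mul_le (L := L) hδ hs hs_sq hK x
  have hgain : κ * (δ / 2 * (s * r) * ‖x‖ ^ 2) - c * ‖L x‖ ^ 2 ≤
      κ * (s * r * (K * A).reApplyInnerSelf x
        - s * (Complex.I • (K * L)).reApplyInnerSelf x) := calc
    κ * (δ / 2 * (s * r) * ‖x‖ ^ 2) - c * ‖L x‖ ^ 2
      ≤ κ * (δ / 2 * (s * r) * ‖x‖ ^ 2) - κ * (N + k ^ 2 / (2 * δ)) * ‖L x‖ ^ 2 := by gcongr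
    _ = κ * (δ / 2 * (s * r) * ‖x‖ ^ 2 - (N + k ^ 2 / (2 * δ)) * ‖L x‖ ^ 2) := by ring
    _ ≤ _ := mul_le_mul_of_nonneg_left (by linarith) hκ
  rw [reApplyInnerSelf_compensatedMultiplier_mul_symbol hA]
  linarith

end Compensation

lemma exists_pos_forall_norm_le {X F : Type*} [TopologicalSpace X] [CompactSpace X]
    [SeminormedAddCommGroup F] {f : X → F} (hf : Continuous f) : ∃ C > 0, ∀ x, ‖f x‖ ≤ C := by
  obtain ⟨C, hC⟩ := (isCompact_range hf).isBounded.exists_pos_norm_le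
  exact ⟨C, hC.1, fun x => hC.2 _ ⟨x, rfl⟩⟩

lemma exists_pos_mul_le_and_mul_le {a b : ℝ} (ha : 0 < a) (hb : 0 < b) {p q : ℝ} (hp : 0 ≤ p)
    (hq : 0 ≤ q) : ∃ κ > 0, κ * p ≤ a ∧ κ * q ≤ b := by
  obtain ⟨κ, hκ, hκa⟩ := exists_pos_mul_lt ha p
  obtain ⟨κ', hκ', hκb⟩ := exists_pos_mul_lt hb q
  refine ⟨min κ κ', lt_min hκ hκ', ?_, ?_⟩
  · exact (mul_le_mul_of_nonneg_right (min_le_left _ _) hp).trans (mul_comm κ p ▸ hκa.le)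
  · exact (mul_le_mul_of_nonneg_right (min_le_right _ _) hq).trans (mul_comm κ' q ▸ hκb.le)

theorem exists_norm_le_exp_mul_of_compensation {E Ω : Type*} [NormedAddCommGroup E]
    [InnerProductSpace ℂ E] [CompleteSpace E] [FiniteDimensional ℂ E] [TopologicalSpace Ω]
    [CompactSpace Ω] {A₀ L S : E →L[ℂ] E} {A K : Ω → E →L[ℂ] E} (hA_cont : Continuous A)
    (hK_cont : Continuous K) (hA₀ : (A₀ : E →ₗ[ℂ] E).IsSymmetric)
    (hA : ∀ ω, (A ω : E →ₗ[ℂ] E).IsSymmetric)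
    (hA₀_pos : ∀ x, x ≠ 0 → 0 < A₀.reApplyInnerSelf x) (hL : ∀ x, 0 ≤ L.reApplyInnerSelf x)
    (hSA₀ : ((S * A₀ : E →L[ℂ] E) : E →ₗ[ℂ] E).IsSymmetric)
    (hSL : ∀ x, 0 ≤ (S * L + L).reApplyInnerSelf x)
    (hSL_ker : ∀ x, (S * L + L + star (S * L + L)) x = 0 → L x = 0)
    (hSA : ∀ ω x, 0 ≤ (Complex.I • (S * A ω)).reApplyInnerSelf x)
    (hKA₀ : ∀ ω, ((Complex.I • (K ω * A₀) : E →L[ℂ] E) : E →ₗ[ℂ] E).IsSymmetric)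
    (hKA : ∀ ω x, L x = 0 → x ≠ 0 → 0 < (K ω * A ω).reApplyInnerSelf x) :
    ∃ C > 0, ∃ c > 0, ∀ r : ℝ, 0 ≤ r → ∀ (ω : Ω) (u u' : ℝ → E),
      (∀ t, 0 ≤ t → HasDerivWithinAt u (u' t) (Set.Ici 0) t) →
      (∀ t, 0 ≤ t → A₀ (u' t) + (((r : ℂ) * Complex.I) • A ω + L) (u t) = 0) →
      ∀ t, 0 ≤ t → ‖u t‖ ≤ C * Real.exp (-(c * (r ^ 2 / (1 + r ^ 2)) * t)) * ‖u 0‖ := by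
  obtain ⟨a, ha, hA₀_coercive⟩ := exists_coercive_of_pos hA₀_pos
  obtain ⟨δ, hδ, N, hN, hKA_coercive⟩ :=
    exists_coercive_of_pos_on_ker (hK_cont.mul hA_cont) L hKA
  obtain ⟨c, hc, hSL_coercive⟩ := exists_mul_norm_sq_le_reApplyInnerSelf hSL hSL_ker
  obtain ⟨k, hk, hK⟩ := exists_pos_forall_norm_le hK_cont
  obtain ⟨κ, hκ, hκA₀, hκc⟩ := exists_pos_mul_le_and_mul_le (p := k * ‖A₀‖)
    (q := N + k ^ 2 / (2 * δ)) one_pos hc (by positivity) (by positivity)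
  set M := max 1 ((‖S * A₀‖ + 2 * 1) / a)
  have hM : 1 ≤ M := le_max_left _ _
  have hMa : ‖S * A₀‖ + 2 * 1 ≤ M * a := (div_le_iff₀ ha).1 (le_max_right _ _)
  set β := M * ‖A₀‖ + ‖S * A₀‖ + 1
  have hβ : 0 < β := by positivity
  refine ⟨√(β / 1), by positivity, κ * δ / 2 / β, by positivity,
    fun r hr ω u u' hu heq t ht => ?_⟩
  set s := r / (1 + r ^ 2)
  have hs : 0 ≤ s := by positivity
  have hs_le_one : s ≤ 1 := (div_le_one (by positivity)).2 (by nlinarith)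
  have hs_le : s ≤ r := div_le_self hr (by nlinarith)
  have hsr : s * r = r ^ 2 / (1 + r ^ 2) := by rw [div_mul_eq_mul_div, pow_two]
  have hsr_le_one : s * r ≤ 1 := hsr ▸ div_le_one_of_le₀ (by linarith) (by positivity)
  have hκs : κ * s * (‖K ω‖ * ‖A₀‖) ≤ 1 := calc
    κ * s * (‖K ω‖ * ‖A₀‖) ≤ κ * 1 * (k * ‖A₀‖) := by gcongr; exact hK ω
    _ ≤ 1 := by rwa [mul_one]
  have hbounds := fun x => compensatedMultiplier_mul_bounds (zero_le_one.trans hM)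
    (hA₀_coercive x) hMa (mul_nonneg hκ.le hs) hκs
  have hdiss := fun x => dissipation_compensatedMultiplier (hA ω) (hL x) (hSL_coercive x)
    (hSA ω x) (hKA_coercive ω x) (hK ω) hM hδ hN hκ.le hκc hs hr
    (pow_two s ▸ mul_le_mul_of_nonneg_left hs_le hs) hsr_le_one
  have hdecay := norm_le_exp_mul_of_lyapunov one_pos hβ (by positivity)
    (isSymmetric_compensatedMultiplier_mul hA₀ hSA₀ (hKA₀ ω)) (fun x => (hbounds x).1)
    (fun x => (hbounds x).2) hdiss hu heq ht
  rwa [hsr, mul_div_right_comm] at hdecay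

section MatrixOperator

variable {m : ℕ}

/-- The operator on Hermitian `ℂᵐ` given by a real matrix. It is bundled as a ring homomorphism
so that conditions on products and sums of matrices become conditions on operators. -/
def euclideanOp : Matrix (Fin m) (Fin m) ℝ →+*
    (EuclideanSpace ℂ (Fin m) →L[ℂ] EuclideanSpace ℂ (Fin m)) :=
  (toEuclideanCLM (n := Fin m) (𝕜 := ℂ) : _ →+* _).comp Complex.ofRealHom.mapMatrix

lemma euclideanOp_eq_toEuclideanCLM (X : Matrix (Fin m) (Fin m) ℝ) :
    euclideanOp X = toEuclideanCLM (𝕜 := ℂ) (cmap X) := rfl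

lemma euclideanOp_toLp (X : Matrix (Fin m) (Fin m) ℝ) (z : Fin m → ℂ) :
    euclideanOp X (WithLp.toLp 2 z) = WithLp.toLp 2 (cmap X *ᵥ z) :=
  toEuclideanCLM_toLp (cmap X) z

lemma euclideanOp_eq_zero_iff {X : Matrix (Fin m) (Fin m) ℝ} {x : EuclideanSpace ℂ (Fin m)} :
    euclideanOp X x = 0 ↔ x.ofLp ∈ kerC X := by
  rw [← WithLp.toLp_ofLp 2 x, euclideanOp_toLp, WithLp.toLp_eq_zero, kerC, Set.mem_ofPred_eq]

lemma continuous_euclideanOp : Continuous (euclideanOp (m := m)) :=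
  (LinearMap.continuous_of_finiteDimensional
    (toEuclideanCLM (n := Fin m) (𝕜 := ℂ)).toAlgEquiv.toLinearMap).comp
    (continuous_id.matrix_map Complex.continuous_ofReal)

lemma star_euclideanOp (X : Matrix (Fin m) (Fin m) ℝ) :
    star (euclideanOp X) = euclideanOp Xᵀ := by
  have hstar : star (cmap X) = cmap Xᵀ := by
    ext i j
    simp only [cmap, star_apply, map_apply, transpose_apply, RCLike.star_def, Complex.conj_ofReal]
  rw [euclideanOp_eq_toEuclideanCLM, ← map_star, hstar, euclideanOp_eq_toEuclideanCLM]

lemma isSymmetric_euclideanOp {X : Matrix (Fin m) (Fin m) ℝ} (hX : Xᵀ = X) :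
    (euclideanOp X : EuclideanSpace ℂ (Fin m) →ₗ[ℂ] _).IsSymmetric := by
  rw [← ContinuousLinearMap.isSelfAdjoint_iff_isSymmetric, isSelfAdjoint_iff,
    star_euclideanOp, hX]

lemma isSymmetric_I_smul_euclideanOp {X : Matrix (Fin m) (Fin m) ℝ} (hX : Xᵀ = -X) :
    ((Complex.I • euclideanOp X : _ →L[ℂ] _) :
      EuclideanSpace ℂ (Fin m) →ₗ[ℂ] _).IsSymmetric := by
  rw [← ContinuousLinearMap.isSelfAdjoint_iff_isSymmetric, isSelfAdjoint_iff, star_smul,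
    star_euclideanOp, hX, map_neg, smul_neg, RCLike.star_def, Complex.conj_I, neg_smul, neg_neg]

lemma reApplyInnerSelf_toEuclideanCLM (Y : Matrix (Fin m) (Fin m) ℂ)
    (x : EuclideanSpace ℂ (Fin m)) :
    (toEuclideanCLM (𝕜 := ℂ) Y).reApplyInnerSelf x = reIP (Y *ᵥ x.ofLp) x.ofLp := by
  rw [ContinuousLinearMap.reApplyInnerSelf_apply, inner_re_symm,
    EuclideanSpace.inner_eq_star_dotProduct, ofLp_toEuclideanCLM]
  rfl

lemma reApplyInnerSelf_euclideanOp (X : Matrix (Fin m) (Fin m) ℝ)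
    (x : EuclideanSpace ℂ (Fin m)) :
    (euclideanOp X).reApplyInnerSelf x = reIP (cmap X *ᵥ x.ofLp) x.ofLp :=
  reApplyInnerSelf_toEuclideanCLM (cmap X) x

lemma symP_add (X Y : Matrix (Fin m) (Fin m) ℝ) : symP (X + Y) = symP X + symP Y := by
  rw [symP, symP, symP, transpose_add, add_add_add_comm, smul_add]

lemma euclideanOp_symP_add_self (X : Matrix (Fin m) (Fin m) ℝ) :
    euclideanOp (symP X) + euclideanOp (symP X) = euclideanOp X + star (euclideanOp X) := by
  rw [← map_add, symP, ← two_smul ℝ, smul_inv_smul₀ two_ne_zero, map_add, star_euclideanOp]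

lemma euclideanOp_skewP_add_self (X : Matrix (Fin m) (Fin m) ℝ) :
    euclideanOp (skewP X) + euclideanOp (skewP X) = euclideanOp X - star (euclideanOp X) := by
  rw [← map_add, skewP, ← two_smul ℝ, smul_inv_smul₀ two_ne_zero, map_sub, star_euclideanOp]

lemma reApplyInnerSelf_euclideanOp_eq_symP (X : Matrix (Fin m) (Fin m) ℝ)
    (x : EuclideanSpace ℂ (Fin m)) :
    (euclideanOp X).reApplyInnerSelf x = reIP (cmap (symP X) *ᵥ x.ofLp) x.ofLp := by
  have hform := reApplyInnerSelf_add_star (euclideanOp X) x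
  rw [← euclideanOp_symP_add_self, reApplyInnerSelf_add] at hform
  rw [← reApplyInnerSelf_euclideanOp]
  linarith

lemma reApplyInnerSelf_I_smul_euclideanOp_eq_skewP (X : Matrix (Fin m) (Fin m) ℝ)
    (x : EuclideanSpace ℂ (Fin m)) :
    (Complex.I • euclideanOp X).reApplyInnerSelf x =
      reIP ((Complex.I • cmap (skewP X)) *ᵥ x.ofLp) x.ofLp := by
  have hop : Complex.I • (euclideanOp (skewP X) + euclideanOp (skewP X)) =
      Complex.I • euclideanOp X + star (Complex.I • euclideanOp X) := by
    rw [euclideanOp_skewP_add_self, I_smul_sub_star]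
  have hform := reApplyInnerSelf_add_star (Complex.I • euclideanOp X) x
  rw [← hop, smul_add, reApplyInnerSelf_add] at hform
  rw [← reApplyInnerSelf_toEuclideanCLM, map_smul, ← euclideanOp_eq_toEuclideanCLM]
  linarith

lemma mem_kerC_symP_of_add_star {X : Matrix (Fin m) (Fin m) ℝ} {x : EuclideanSpace ℂ (Fin m)}
    (hx : (euclideanOp X + star (euclideanOp X)) x = 0) : x.ofLp ∈ kerC (symP X) := by
  rwa [← euclideanOp_symP_add_self, _root_.add_apply, ← two_smul ℂ,
    smul_eq_zero_iff_right two_ne_zero, euclideanOp_eq_zero_iff] at hx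

lemma cnrm_eq_norm_toLp (z : Fin m → ℂ) : cnrm z = ‖WithLp.toLp 2 z‖ := by
  simp only [cnrm, EuclideanSpace.norm_eq, Complex.normSq_eq_norm_sq]

end MatrixOperator

lemma isCompact_setOf_sum_sq_eq_one {ι : Type*} [Fintype ι] :
    IsCompact {ω : ι → ℝ | ∑ j, ω j ^ 2 = 1} := by
  refine Metric.isCompact_of_isClosed_isBounded (isClosed_eq (by fun_prop) continuous_const)
    (isBounded_iff_forall_norm_le.2 ⟨1, fun ω (hω : ∑ j, ω j ^ 2 = 1) => ?_⟩)
  rw [pi_norm_le_iff_of_nonneg zero_le_one]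
  exact fun j => (sq_le_one_iff_abs_le_one _).1
    ((single_le_sum (fun i _ => sq_nonneg (ω i)) (mem_univ j)).trans_eq hω)

theorem decay_standard_nonsymmetric_pointwise_general {m : ℕ} {Ω : Type*} [TopologicalSpace Ω]
    {s : Set Ω} (hs : IsCompact s) {A₀ L S : Matrix (Fin m) (Fin m) ℝ}
    {A K : Ω → Matrix (Fin m) (Fin m) ℝ} (hA_cont : ContinuousOn A s) (hK_cont : ContinuousOn K s)
    (hA₀ : A₀ᵀ = A₀) (hA : ∀ ω ∈ s, (A ω)ᵀ = A ω)
    (hA₀_pos : ∀ z, z ≠ 0 → 0 < reIP (cmap A₀ *ᵥ z) z) (hL : ∀ z, 0 ≤ reIP (cmap L *ᵥ z) z)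
    (hSA₀ : (S * A₀)ᵀ = S * A₀) (hSL : ∀ z, 0 ≤ reIP (cmap (symP (S * L) + symP L) *ᵥ z) z)
    (hSL_ker : kerC (symP (S * L) + symP L) ⊆ kerC L)
    (hSA : ∀ ω ∈ s, ∀ z, 0 ≤ reIP ((Complex.I • cmap (skewP (S * A ω))) *ᵥ z) z)
    (hKA₀ : ∀ ω ∈ s, (K ω * A₀)ᵀ = -(K ω * A₀))
    (hKA : ∀ ω ∈ s, ∀ z ∈ kerC L, z ≠ 0 → 0 < reIP (cmap (symP (K ω * A ω)) *ᵥ z) z) :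
    ∃ C > 0, ∃ c > 0, ∀ r : ℝ, 0 ≤ r → ∀ ω ∈ s, ∀ u u' : ℝ → Fin m → ℂ,
      (∀ t, 0 ≤ t → HasDerivWithinAt u (u' t) (Set.Ici 0) t) →
      (∀ t, 0 ≤ t → cmap A₀ *ᵥ u' t + ((r : ℂ) * Complex.I) • cmap (A ω) *ᵥ u t
        + cmap L *ᵥ u t = 0) →
      ∀ t, 0 ≤ t →
        cnrm (u t) ≤ C * Real.exp (-(c * (r ^ 2 / (1 + r ^ 2)) * t)) * cnrm (u 0) := by
  have := isCompact_iff_compactSpace.1 hs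
  obtain ⟨C, hC, c, hc, hdecay⟩ := exists_norm_le_exp_mul_of_compensation
    (A₀ := euclideanOp A₀) (L := euclideanOp L) (S := euclideanOp S)
    (A := fun ω : s => euclideanOp (A ω)) (K := fun ω : s => euclideanOp (K ω))
    (continuous_euclideanOp.comp hA_cont.domRestrict)
    (continuous_euclideanOp.comp hK_cont.domRestrict)
    (isSymmetric_euclideanOp hA₀) (fun ω => isSymmetric_euclideanOp (hA ω ω.2))
    (fun x hx => reApplyInnerSelf_euclideanOp A₀ x ▸ hA₀_pos _ (by simpa using hx))
    (fun x => reApplyInnerSelf_euclideanOp L x ▸ hL _)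
    (by rw [← map_mul]; exact isSymmetric_euclideanOp hSA₀)
    (fun x => by
      rw [← map_mul, ← map_add, reApplyInnerSelf_euclideanOp_eq_symP, symP_add]; exact hSL _)
    (fun x hx => by
      rw [← map_mul, ← map_add] at hx
      exact euclideanOp_eq_zero_iff.2 (hSL_ker (symP_add _ _ ▸ mem_kerC_symP_of_add_star hx)))
    (fun ω x => by
      rw [← map_mul, reApplyInnerSelf_I_smul_euclideanOp_eq_skewP]; exact hSA ω ω.2 _)
    (fun ω => by rw [← map_mul]; exact isSymmetric_I_smul_euclideanOp (hKA₀ ω ω.2))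
    (fun ω x hLx hx => by
      rw [← map_mul, reApplyInnerSelf_euclideanOp_eq_symP]
      exact hKA ω ω.2 _ (euclideanOp_eq_zero_iff.1 hLx) (by simpa using hx))
  refine ⟨C, hC, c, hc, fun r hr ω hω u u' hu heq t ht => ?_⟩
  simp only [cnrm_eq_norm_toLp]
  exact hdecay r hr ⟨ω, hω⟩ (fun t => WithLp.toLp 2 (u t)) (fun t => WithLp.toLp 2 (u' t))
    (fun t ht => (PiLp.continuousLinearEquiv 2 ℝ
      (fun _ : Fin m => ℂ)).symm.hasFDerivAt.comp_hasDerivWithinAt t (hu t ht))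
    (fun t ht => by
      simpa [euclideanOp_toLp, add_assoc] using congrArg (WithLp.toLp 2) (heq t ht)) t ht

/-- **Theorem 2.2 (decay property of the standard type, pointwise estimate).**
Under conditions (A), (S), (S)₂ and (K), solutions of `A⁰û′ + i r A(ω) û + L û = 0` satisfy
`|û(t)| ≤ C e^{−c ρ(r) t} |û(0)|` with `ρ(r) = r²/(1+r²)`. -/
theorem decay_standard_nonsymmetric_pointwise
    (m n : ℕ) (hm : 1 ≤ m) (hn : 1 ≤ n)
    (A0 : Matrix (Fin m) (Fin m) ℝ) (A : Fin n → Matrix (Fin m) (Fin m) ℝ)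
    (L : Matrix (Fin m) (Fin m) ℝ)
    -- condition (A)
    (hA0sym : A0ᵀ = A0) (hAsym : ∀ j, (A j)ᵀ = A j)
    (hA0pos : ∀ z : Fin m → ℂ, z ≠ 0 → 0 < reIP ((cmap A0).mulVec z) z)
    (hLnn : ∀ z : Fin m → ℂ, 0 ≤ reIP ((cmap L).mulVec z) z)
    (hLker : ∃ z : Fin m → ℂ, z ≠ 0 ∧ z ∈ kerC L)
    -- condition (S)
    (S : Matrix (Fin m) (Fin m) ℝ)
    (hSA0 : (S * A0)ᵀ = S * A0)
    (hSLnn : ∀ z : Fin m → ℂ, 0 ≤ reIP ((cmap (symP (S * L) + symP L)).mulVec z) z)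
    (hSLker : kerC (symP (S * L) + symP L) = kerC L)
    -- condition (S)₂ : `i(SA(ω))₂ ≥ 0` on `ℂᵐ`
    (hS2 : ∀ ω : Fin n → ℝ, (∑ j, ω j ^ 2 = 1) → ∀ z : Fin m → ℂ,
      0 ≤ reIP ((Complex.I • cmap (skewP (S * (∑ j, ω j • A j)))).mulVec z) z)
    -- condition (K): a smooth compensating matrix family
    (K : (Fin n → ℝ) → Matrix (Fin m) (Fin m) ℝ)
    (hKsmooth : ∀ i j, ContDiff ℝ (⊤ : ℕ∞) (fun ω => K ω i j))
    (hKodd : ∀ ω : Fin n → ℝ, (∑ j, ω j ^ 2 = 1) → K (-ω) = - K ω)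
    (hKA0 : ∀ ω : Fin n → ℝ, (∑ j, ω j ^ 2 = 1) → (K ω * A0)ᵀ = -(K ω * A0))
    (hKpos : ∀ ω : Fin n → ℝ, (∑ j, ω j ^ 2 = 1) → ∀ z ∈ kerC L, z ≠ 0 →
      0 < reIP ((cmap (symP (K ω * (∑ j, ω j • A j)))).mulVec z) z) :
    ∃ C > (0:ℝ), ∃ c > (0:ℝ), ∀ r : ℝ, 0 ≤ r → ∀ ω : Fin n → ℝ, (∑ j, ω j ^ 2 = 1) →
      ∀ u u' : ℝ → (Fin m → ℂ),
      (∀ t : ℝ, 0 ≤ t → HasDerivWithinAt u (u' t) (Set.Ici 0) t) →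
      (∀ t : ℝ, 0 ≤ t →
        (cmap A0).mulVec (u' t)
          + ((r : ℂ) * Complex.I) • (cmap (∑ j, ω j • A j)).mulVec (u t)
          + (cmap L).mulVec (u t) = 0) →
      ∀ t : ℝ, 0 ≤ t →
        cnrm (u t) ≤ C * Real.exp (-(c * (r ^ 2 / (1 + r ^ 2)) * t)) * cnrm (u 0) := by
  exact decay_standard_nonsymmetric_pointwise_general isCompact_setOf_sum_sq_eq_one
    (by fun_prop) (continuous_matrix fun i j => (hKsmooth i j).continuous).continuousOn hA0sym
    (fun ω _ => by simp only [transpose_sum, transpose_smul, hAsym]) hA0pos hLnn hSA0 hSLnn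
    hSLker.subset hS2 hKA0 hKpos
end
end

section
/- Let L be a real m×m matrix with L ≥ 0 on ℂᵐ, let N be a real symmetric m×m matrix with N ≥ 0 on ℂᵐ and Ker(N) = Ker(L), and let M be a real symmetric m×m matrix. Then M > 0 on Ker(L) if and only if there exists α > 0 such that αM + N > 0 on ℂᵐ. (In the paper this is applied with M = (K(ω)A(ω))₁ and N = (SL)₁ + L₁, showing that under conditions (A) and (S) the positivity (K(ω)A(ω))₁ > 0 on Ker(L) is equivalent to α(K(ω)A(ω))₁ + (SL)₁ + L₁ > 0 on ℂᵐ for suitably small α > 0.) -/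
open Matrix BigOperators Finset

noncomputable section

/-!
Let `f z = Re ⟨Nz, z⟩` and `g z = Re ⟨Mz, z⟩`. Near every point of the unit sphere, `α g + f` is
positive once `α > 0` is small: where `f > 0` the term `α g` is a small perturbation, and where
`f = 0`, i.e. on the kernel of `N`, one has `g > 0` nearby while `f ≥ 0`. Compactness gives one `α`
for the whole sphere, and homogeneity carries the inequality to all nonzero vectors.
-/

section SmallMultiples

open Filter Topology

theorem eventually_forall_mul_add_pos_of_isCompact {X : Type*} [TopologicalSpace X]
    {K : Set X} (hK : IsCompact K) {f g : X → ℝ}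
    (hf : LowerSemicontinuousOn f K) (hg : LowerSemicontinuousOn g K)
    (hf_nonneg : ∀ x ∈ K, 0 ≤ f x) (hfg : ∀ x ∈ K, f x = 0 → 0 < g x) :
    ∀ᶠ α in 𝓝[>] (0 : ℝ), ∀ x ∈ K, 0 < α * g x + f x := by
  have locally_pos : ∀ x ∈ K, ∃ t ∈ 𝓝[K] x,
      ∀ᶠ α in 𝓝[>] (0 : ℝ), ∀ y ∈ t, 0 < α * g y + f y := by
    intro x hx
    rcases (hf_nonneg x hx).eq_or_lt' with hfx | hfx
    · refine ⟨{y | 0 < g y ∧ y ∈ K}, (hg x hx 0 (hfg x hx hfx)).and self_mem_nhdsWithin, ?_⟩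
      filter_upwards [self_mem_nhdsWithin] with α hα y ⟨hgy, hy⟩
      exact add_pos_of_pos_of_nonneg (mul_pos hα hgy) (hf_nonneg y hy)
    · refine ⟨{y | f x / 2 < f y ∧ g x - 1 < g y},
        (hf x hx _ (half_lt_self hfx)).and (hg x hx _ (sub_one_lt _)), ?_⟩
      have lower_bound_pos : ∀ᶠ α in 𝓝[>] (0 : ℝ), 0 < α * (g x - 1) + f x / 2 := by
        have : ContinuousAt (fun α : ℝ ↦ α * (g x - 1) + f x / 2) 0 := by fun_prop
        exact (this.eventually_const_lt (by simpa using hfx)).filter_mono nhdsWithin_le_nhds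
      filter_upwards [lower_bound_pos, self_mem_nhdsWithin] with α hα hα_pos y ⟨hfy, hgy⟩
      calc 0 < α * (g x - 1) + f x / 2 := hα
        _ < α * g y + f y := add_lt_add (mul_lt_mul_of_pos_left hgy hα_pos) hfy
  exact hK.induction_on (p := fun s ↦ ∀ᶠ α in 𝓝[>] (0 : ℝ), ∀ x ∈ s, 0 < α * g x + f x)
    (by simp) (fun s t hst ht ↦ ht.mono fun α h x hx ↦ h x (hst hx))
    (fun s t hs ht ↦ (hs.and ht).mono fun α h x hx ↦ hx.elim (h.1 x) (h.2 x)) locally_pos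

theorem eventually_forall_mul_add_pos_of_homogeneous {E : Type*} [NormedAddCommGroup E]
    [NormedSpace ℝ E] [ProperSpace E] {f g : E → ℝ} {p : ℕ}
    (hf : LowerSemicontinuous f) (hg : LowerSemicontinuous g)
    (hf_smul : ∀ r > (0 : ℝ), ∀ x, f (r • x) = r ^ p * f x)
    (hg_smul : ∀ r > (0 : ℝ), ∀ x, g (r • x) = r ^ p * g x)
    (hf_nonneg : ∀ x, 0 ≤ f x) (hfg : ∀ x, f x = 0 → x ≠ 0 → 0 < g x) :
    ∀ᶠ α in 𝓝[>] (0 : ℝ), ∀ x, x ≠ 0 → 0 < α * g x + f x := by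
  have on_sphere := eventually_forall_mul_add_pos_of_isCompact
    (isCompact_sphere (0 : E) 1) (hf.lowerSemicontinuousOn _) (hg.lowerSemicontinuousOn _)
    (fun x _ ↦ hf_nonneg x) fun x hx h ↦ hfg x h (ne_zero_of_mem_unit_sphere ⟨x, hx⟩)
  filter_upwards [on_sphere] with α hα x hx
  have hr : 0 < ‖x‖⁻¹ := inv_pos.mpr (norm_pos_iff.mpr hx)
  have h := hα (‖x‖⁻¹ • x) (by simp [norm_smul, hx])
  rw [hf_smul _ hr, hg_smul _ hr, mul_left_comm, ← mul_add] at h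
  exact pos_of_mul_pos_right h (pow_pos hr p).le

end SmallMultiples

section HermitianForm

open scoped ComplexOrder

variable {𝕜 n : Type*} [RCLike 𝕜] [Fintype n]

theorem continuous_re_star_dotProduct_mulVec (A : Matrix n n 𝕜) :
    Continuous fun z : n → 𝕜 ↦ RCLike.re (star z ⬝ᵥ A *ᵥ z) := by
  fun_prop

theorem re_star_dotProduct_mulVec_smul (A : Matrix n n 𝕜) (r : ℝ) (z : n → 𝕜) :
    RCLike.re (star (r • z) ⬝ᵥ A *ᵥ (r • z)) = r ^ 2 * RCLike.re (star z ⬝ᵥ A *ᵥ z) := by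
  rw [star_smul, star_trivial, mulVec_smul, smul_dotProduct, dotProduct_smul, smul_smul,
    RCLike.smul_re, sq]

theorem re_star_dotProduct_smul_add_mulVec (A B : Matrix n n 𝕜) (α : ℝ) (z : n → 𝕜) :
    RCLike.re (star z ⬝ᵥ (α • A + B) *ᵥ z) =
      α * RCLike.re (star z ⬝ᵥ A *ᵥ z) + RCLike.re (star z ⬝ᵥ B *ᵥ z) := by
  rw [add_mulVec, smul_mulVec, dotProduct_add, dotProduct_smul, map_add, RCLike.smul_re]

theorem mulVec_eq_zero_of_re_star_dotProduct_eq_zero {N : Matrix n n 𝕜} (hN : N.PosSemidef)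
    {z : n → 𝕜} (hz : RCLike.re (star z ⬝ᵥ N *ᵥ z) = 0) : N *ᵥ z = 0 :=
  (hN.dotProduct_mulVec_zero_iff z).mp <|
    RCLike.ext (by simpa using hz) (by simpa using hN.isHermitian.im_star_dotProduct_mulVec_self z)

theorem positivity_on_kernel_iff_global_nonsymmetric_general {N : Matrix n n 𝕜}
    (hN : N.PosSemidef) (M : Matrix n n 𝕜) :
    (∀ z, N *ᵥ z = 0 → z ≠ 0 → 0 < RCLike.re (star z ⬝ᵥ M *ᵥ z)) ↔
      ∃ α > (0 : ℝ), ∀ z, z ≠ 0 → 0 < RCLike.re (star z ⬝ᵥ (α • M + N) *ᵥ z) := by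
  simp only [re_star_dotProduct_smul_add_mulVec]
  constructor
  · intro hM
    have small_multiples := eventually_forall_mul_add_pos_of_homogeneous
      (continuous_re_star_dotProduct_mulVec N).lowerSemicontinuous
      (continuous_re_star_dotProduct_mulVec M).lowerSemicontinuous
      (fun r _ ↦ re_star_dotProduct_mulVec_smul N r)
      (fun r _ ↦ re_star_dotProduct_mulVec_smul M r) hN.re_dotProduct_nonneg
      fun z hz ↦ hM z (mulVec_eq_zero_of_re_star_dotProduct_eq_zero hN hz)
    obtain ⟨α, hα, hα_pos⟩ := (small_multiples.and self_mem_nhdsWithin).exists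
    exact ⟨α, hα_pos, hα⟩
  · rintro ⟨α, hα, hαM⟩ z hz hz_ne
    have h : 0 < α * RCLike.re (star z ⬝ᵥ M *ᵥ z) := by simpa [hz] using hαM z hz_ne
    exact pos_of_mul_pos_right h hα.le

end HermitianForm

section Complexification

open scoped ComplexOrder

variable {m : ℕ}

theorem reIP_eq_re_star_dotProduct (x y : Fin m → ℂ) : reIP x y = RCLike.re (star y ⬝ᵥ x) := by
  rw [dotProduct_comm]
  rfl

theorem cmap_smul_add {a b : ℕ} (α : ℝ) (X Y : Matrix (Fin a) (Fin b) ℝ) :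
    cmap (α • X + Y) = α • cmap X + cmap Y := by
  ext i j
  simp [cmap]

theorem isHermitian_cmap {N : Matrix (Fin m) (Fin m) ℝ} (hN : Nᵀ = N) : (cmap N).IsHermitian :=
  IsHermitian.map (by rwa [IsHermitian, conjTranspose_eq_transpose_of_trivial]) _
    fun x ↦ (Complex.conj_ofReal x).symm

theorem posSemidef_cmap {N : Matrix (Fin m) (Fin m) ℝ} (hN : Nᵀ = N)
    (hN_nonneg : ∀ z, 0 ≤ reIP (cmap N *ᵥ z) z) : (cmap N).PosSemidef := by
  refine .of_dotProduct_mulVec_nonneg (isHermitian_cmap hN) fun z ↦ RCLike.nonneg_iff.mpr ⟨?_, ?_⟩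
  · exact reIP_eq_re_star_dotProduct _ z ▸ hN_nonneg z
  · exact (isHermitian_cmap hN).im_star_dotProduct_mulVec_self z

end Complexification

/-- **Remark 2.** Let `L ≥ 0` (not necessarily symmetric), `N` real symmetric with `N ≥ 0`
and `Ker(N) = Ker(L)`, and `M` real symmetric. Then `M > 0` on `Ker(L)` iff
`αM + N > 0` on `ℂᵐ` for some `α > 0`. -/
theorem positivity_on_kernel_iff_global_nonsymmetric
    (m : ℕ) (hm : 1 ≤ m)
    (L N M : Matrix (Fin m) (Fin m) ℝ)
    (hLnn : ∀ z : Fin m → ℂ, 0 ≤ reIP ((cmap L).mulVec z) z)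
    (hNsym : Nᵀ = N)
    (hNnn : ∀ z : Fin m → ℂ, 0 ≤ reIP ((cmap N).mulVec z) z)
    (hNker : kerC N = kerC L)
    (hMsym : Mᵀ = M) :
    (∀ z ∈ kerC L, z ≠ 0 → 0 < reIP ((cmap M).mulVec z) z) ↔
      (∃ α > (0:ℝ), ∀ z : Fin m → ℂ, z ≠ 0 →
        0 < reIP ((cmap (α • M + N)).mulVec z) z) := by
  rw [← hNker]
  simpa only [kerC, Set.mem_ofPred_eq, cmap_smul_add, reIP_eq_re_star_dotProduct] using
    positivity_on_kernel_iff_global_nonsymmetric_general (posSemidef_cmap hNsym hNnn) (cmap M)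
end
end
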